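/- Let ω = (w₁,…,w_m) be a weight vector and let A₁,…,A_m be n×n positive definite complex matrices. Suppose X ∈ Γ(ω; A₁,…,A_m) with X ≤ I, and suppose Y is a positive definite matrix satisfying the Wasserstein-mean equation Σᵢ₌₁^m wᵢ (Aᵢ ♯ Y⁻¹) = I. Then tr(X³) ≤ tr(Y). -/

import Mathlib

/-!
In fact `tr X ≤ tr Y` holds for every `X ∈ Γ(ω; A₁,…,A_m)`, and `X ≤ I` gives `tr X³ ≤ tr X`.

Put `Gᵢ = Aᵢ ♯ X⁻¹` and `Hᵢ = Aᵢ ♯ Y⁻¹`, so that `Gᵢ X Gᵢ = Aᵢ = Hᵢ Y Hᵢ` (`geom_spec`).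
Since `(Hᵢ - Gᵢ) Hᵢ⁻¹ (Hᵢ - Gᵢ) ≥ 0`, pairing with `X` under the trace gives
`2 tr (X Gᵢ) ≤ tr (X Hᵢ) + tr (Aᵢ Hᵢ⁻¹) = tr (X Hᵢ) + tr (Y Hᵢ)` (`two_trace_le`).
Averaging with `∑ wᵢ Hᵢ = I` bounds `2 ∑ wᵢ tr (X Gᵢ)` by `tr X + tr Y`. On the other hand
`log G ≤ G - I` and `∑ wᵢ log Gᵢ = 0` give `∑ wᵢ Gᵢ ≥ I`, hence `∑ wᵢ tr (X Gᵢ) ≥ tr X`.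
-/


open Matrix
open scoped ComplexOrder

/-- Functional calculus for Hermitian matrices: apply `f` to the eigenvalues. -/
noncomputable def herm {n : ℕ} (f : ℝ → ℝ) (A : Matrix (Fin n) (Fin n) ℂ) :
    Matrix (Fin n) (Fin n) ℂ :=
  if hA : A.IsHermitian then
    (hA.eigenvectorUnitary : Matrix (Fin n) (Fin n) ℂ) *
      Matrix.diagonal (fun i => (f (hA.eigenvalues i) : ℂ)) *
      (star (hA.eigenvectorUnitary : Matrix (Fin n) (Fin n) ℂ))
  else 0

/-- Square root of a positive definite matrix. -/
noncomputable def msqrt {n : ℕ} (A : Matrix (Fin n) (Fin n) ℂ) : Matrix (Fin n) (Fin n) ℂ :=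
  herm Real.sqrt A

/-- Logarithm of a positive definite matrix. -/
noncomputable def mlog {n : ℕ} (A : Matrix (Fin n) (Fin n) ℂ) : Matrix (Fin n) (Fin n) ℂ :=
  herm Real.log A

/-- Real power of a positive definite matrix. -/
noncomputable def mpow {n : ℕ} (A : Matrix (Fin n) (Fin n) ℂ) (t : ℝ) :
    Matrix (Fin n) (Fin n) ℂ :=
  herm (fun x => x ^ t) A

/-- Metric geometric mean `A ♯ B = A^{1/2} (A^{-1/2} B A^{-1/2})^{1/2} A^{1/2}`. -/
noncomputable def geom {n : ℕ} (A B : Matrix (Fin n) (Fin n) ℂ) : Matrix (Fin n) (Fin n) ℂ :=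
  msqrt A * msqrt ((msqrt A)⁻¹ * B * (msqrt A)⁻¹) * msqrt A

/-- The solution set `Γ(ω; A₁,…,A_m)` of the spectral-geometric-mean equation
`∑ᵢ wᵢ log(Aᵢ ♯ X⁻¹) = 0` among positive definite matrices. -/
noncomputable def Gamma {m n : ℕ} (w : Fin m → ℝ) (A : Fin m → Matrix (Fin n) (Fin n) ℂ) :
    Set (Matrix (Fin n) (Fin n) ℂ) :=
  {X | X.PosDef ∧ ∑ i, w i • mlog (geom (A i) X⁻¹) = 0}

open scoped MatrixOrder in
theorem trace_mul_re_nonneg {n : ℕ} {P Q : Matrix (Fin n) (Fin n) ℂ}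
    (hP : P.PosSemidef) (hQ : Q.PosSemidef) : 0 ≤ (P * Q).trace.re := by
  obtain ⟨B, rfl⟩ : ∃ B : Matrix (Fin n) (Fin n) ℂ, P = Bᴴ * B := by
    obtain ⟨B, hB⟩ := CStarAlgebra.nonneg_iff_eq_star_mul_self.mp hP.nonneg
    exact ⟨B, hB⟩
  have h := (hQ.mul_mul_conjTranspose_same B).trace_nonneg
  rw [Matrix.mul_assoc, Matrix.trace_mul_comm]
  exact (Complex.le_def.mp h).1

theorem msqrt_mul_self {n : ℕ} {A : Matrix (Fin n) (Fin n) ℂ} (hA : A.PosDef) :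
    msqrt A * msqrt A = A := by
  have hH := hA.isHermitian
  have hU : star (hH.eigenvectorUnitary : Matrix (Fin n) (Fin n) ℂ) *
      (hH.eigenvectorUnitary : Matrix (Fin n) (Fin n) ℂ) = 1 := Unitary.coe_star_mul_self _
  have hs := hH.spectral_theorem
  rw [Unitary.conjStarAlgAut_apply] at hs
  conv_rhs => rw [hs]
  simp only [msqrt, herm, dif_pos hH]
  generalize (hH.eigenvectorUnitary : Matrix (Fin n) (Fin n) ℂ) = U at hU ⊢
  have hD : (Matrix.diagonal fun i => (Real.sqrt (hH.eigenvalues i) : ℂ)) *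
      (Matrix.diagonal fun i => (Real.sqrt (hH.eigenvalues i) : ℂ)) =
      Matrix.diagonal (RCLike.ofReal ∘ hH.eigenvalues) := by
    rw [Matrix.diagonal_mul_diagonal]
    congr 1
    funext i
    rw [← Complex.ofReal_mul, Real.mul_self_sqrt (hA.eigenvalues_pos i).le]
    rfl
  rw [← hD]
  generalize (Matrix.diagonal fun i => (Real.sqrt (hH.eigenvalues i) : ℂ)) = D
  calc U * D * star U * (U * D * star U) = U * D * (star U * U) * D * star U := by
        simp only [Matrix.mul_assoc]
    _ = U * (D * D) * star U := by rw [hU, Matrix.mul_one]; simp only [Matrix.mul_assoc]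

theorem msqrt_posDef {n : ℕ} {A : Matrix (Fin n) (Fin n) ℂ} (hA : A.PosDef) :
    (msqrt A).PosDef := by
  have hpsd : (msqrt A).PosSemidef := by
    simp only [msqrt, herm, dif_pos hA.isHermitian]
    refine PosSemidef.mul_mul_conjTranspose_same (Matrix.PosSemidef.diagonal fun i => ?_) _
    exact Complex.zero_le_real.mpr (Real.sqrt_nonneg _)
  refine hpsd.posDef_iff_isUnit.mpr ?_
  have h := hA.isUnit
  rw [← msqrt_mul_self hA] at h
  exact isUnit_of_mul_isUnit_left h

/-- The operator inequality `log G ≤ G - I`. -/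
theorem sub_one_sub_mlog_posSemidef {n : ℕ} {G : Matrix (Fin n) (Fin n) ℂ} (hG : G.PosDef) :
    (G - 1 - mlog G).PosSemidef := by
  have hH := hG.isHermitian
  have hU : (hH.eigenvectorUnitary : Matrix (Fin n) (Fin n) ℂ) *
      star (hH.eigenvectorUnitary : Matrix (Fin n) (Fin n) ℂ) = 1 := Unitary.coe_mul_star_self _
  have hs := hH.spectral_theorem
  rw [Unitary.conjStarAlgAut_apply] at hs
  have key : G - 1 - mlog G = (hH.eigenvectorUnitary : Matrix (Fin n) (Fin n) ℂ) *
      (Matrix.diagonal fun i =>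
        ((hH.eigenvalues i - 1 - Real.log (hH.eigenvalues i) : ℝ) : ℂ)) *
      star (hH.eigenvectorUnitary : Matrix (Fin n) (Fin n) ℂ) := by
    have hD : (Matrix.diagonal fun i =>
        ((hH.eigenvalues i - 1 - Real.log (hH.eigenvalues i) : ℝ) : ℂ)) =
        Matrix.diagonal (RCLike.ofReal ∘ hH.eigenvalues) - 1 -
        Matrix.diagonal fun i => (Real.log (hH.eigenvalues i) : ℂ) := by
      rw [← Matrix.diagonal_one, Matrix.diagonal_sub, Matrix.diagonal_sub]
      congr 1
      funext i
      simp
    rw [hD, Matrix.mul_sub, Matrix.mul_sub, Matrix.sub_mul, Matrix.sub_mul, ← hs,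
      Matrix.mul_one, hU]
    simp only [mlog, herm, dif_pos hH]
  rw [key]
  refine PosSemidef.mul_mul_conjTranspose_same (Matrix.PosSemidef.diagonal fun i => ?_) _
  refine Complex.zero_le_real.mpr ?_
  have := Real.log_le_sub_one_of_pos (hG.eigenvalues_pos i)
  linarith

theorem posDef_conj {n : ℕ} {S T : Matrix (Fin n) (Fin n) ℂ} (hS : S.PosDef) (hT : T.PosDef) :
    (S * T * S).PosDef := by
  have h := hT.mul_mul_conjTranspose_same (B := S)
    (Matrix.vecMul_injective_of_isUnit hS.isUnit)
  rwa [hS.isHermitian.eq] at h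

/-- `A ♯ X⁻¹` is a positive definite solution `G` of the Riccati equation `G X G = A`. -/
theorem geom_spec {n : ℕ} {A X : Matrix (Fin n) (Fin n) ℂ} (hA : A.PosDef) (hX : X.PosDef) :
    (geom A X⁻¹).PosDef ∧ geom A X⁻¹ * X * geom A X⁻¹ = A := by
  have hS := msqrt_posDef hA
  have hSS := msqrt_mul_self hA
  have hM : ((msqrt A)⁻¹ * X⁻¹ * (msqrt A)⁻¹).PosDef := posDef_conj hS.inv hX.inv
  have hT := msqrt_posDef hM
  have hTT := msqrt_mul_self hM
  unfold geom
  refine ⟨posDef_conj hS hT, ?_⟩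
  generalize msqrt ((msqrt A)⁻¹ * X⁻¹ * (msqrt A)⁻¹) = T at hT hTT
  generalize msqrt A = S at hS hSS hTT
  have hSu := (Matrix.isUnit_iff_isUnit_det _).mp hS.isUnit
  have hTu := (Matrix.isUnit_iff_isUnit_det _).mp hT.isUnit
  have hSXS : S * X * S = T⁻¹ * T⁻¹ := by
    rw [← Matrix.mul_inv_rev, hTT, Matrix.mul_inv_rev, Matrix.mul_inv_rev,
      Matrix.nonsing_inv_nonsing_inv _ hSu,
      Matrix.nonsing_inv_nonsing_inv _ ((Matrix.isUnit_iff_isUnit_det _).mp hX.isUnit),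
      Matrix.mul_assoc]
  calc S * T * S * X * (S * T * S) = S * T * (S * X * S) * T * S := by
        simp only [Matrix.mul_assoc]
    _ = S * (T * T⁻¹) * (T⁻¹ * T) * S := by rw [hSXS]; simp only [Matrix.mul_assoc]
    _ = A := by
        rw [Matrix.mul_nonsing_inv _ hTu, Matrix.nonsing_inv_mul _ hTu, Matrix.mul_one,
          Matrix.mul_one, hSS]

/-- If `G X G = H Y H`, then `2 tr (X G) ≤ tr (X H) + tr (Y H)`: the difference of the two sides
is `tr (X (H - G) H⁻¹ (H - G))`. -/
theorem two_trace_le {n : ℕ} {X Y G H : Matrix (Fin n) (Fin n) ℂ} (hX : X.PosDef)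
    (hG : G.PosDef) (hH : H.PosDef) (h : G * X * G = H * Y * H) :
    2 * (X * G).trace.re ≤ (X * H).trace.re + (Y * H).trace.re := by
  have hHu := (Matrix.isUnit_iff_isUnit_det _).mp hH.isUnit
  have hpsd := hH.inv.posSemidef.mul_mul_conjTranspose_same (H - G)
  rw [(hH.isHermitian.sub hG.isHermitian).eq] at hpsd
  have hexp : (H - G) * H⁻¹ * (H - G) = H - G - G + G * H⁻¹ * G := by
    rw [Matrix.sub_mul, Matrix.mul_nonsing_inv _ hHu, Matrix.sub_mul, Matrix.one_mul,
      Matrix.mul_sub, Matrix.mul_assoc G H⁻¹ H, Matrix.nonsing_inv_mul _ hHu, Matrix.mul_one]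
    abel
  have hcyc : (X * (G * H⁻¹ * G)).trace = (Y * H).trace := by
    calc (X * (G * H⁻¹ * G)).trace = (X * G * H⁻¹ * G).trace := by
          simp only [Matrix.mul_assoc]
      _ = (G * X * G * H⁻¹).trace := by
          rw [Matrix.trace_mul_comm]; simp only [Matrix.mul_assoc]
      _ = (H * Y).trace := by
          rw [h, Matrix.mul_assoc, Matrix.mul_nonsing_inv _ hHu, Matrix.mul_one]
      _ = (Y * H).trace := Matrix.trace_mul_comm _ _
  have h0 := trace_mul_re_nonneg hX.posSemidef hpsd
  rw [hexp, Matrix.mul_add, Matrix.mul_sub, Matrix.mul_sub, Matrix.trace_add, Matrix.trace_sub,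
    Matrix.trace_sub, hcyc] at h0
  simp only [Complex.add_re, Complex.sub_re] at h0
  linarith

theorem trace_mul_sum_smul_re {m n : ℕ} (w : Fin m → ℝ) (Z : Matrix (Fin n) (Fin n) ℂ)
    (B : Fin m → Matrix (Fin n) (Fin n) ℂ) :
    (Z * ∑ i, w i • B i).trace.re = ∑ i, w i * (Z * B i).trace.re := by
  simp [Matrix.mul_sum, Matrix.trace_sum, Matrix.trace_smul]

theorem stmt14 {m n : ℕ} (w : Fin m → ℝ) (hw : ∀ i, 0 < w i) (hw1 : ∑ i, w i = 1)
    (A : Fin m → Matrix (Fin n) (Fin n) ℂ) (hA : ∀ i, (A i).PosDef)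
    (X Y : Matrix (Fin n) (Fin n) ℂ) (hX : X ∈ Gamma w A)
    (hXle : ((1 : Matrix (Fin n) (Fin n) ℂ) - X).PosSemidef)
    (hY : Y.PosDef) (hYeq : ∑ i, w i • geom (A i) Y⁻¹ = 1) :
    (X ^ 3).trace.re ≤ Y.trace.re := by
  obtain ⟨hXp, hlog⟩ := hX
  have hlow : X.trace.re ≤ ∑ i, w i * (X * geom (A i) X⁻¹).trace.re := by
    have hterm : ∀ i, w i * X.trace.re + w i * (X * mlog (geom (A i) X⁻¹)).trace.re ≤
        w i * (X * geom (A i) X⁻¹).trace.re := by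
      intro i
      have h0 := trace_mul_re_nonneg hXp.posSemidef
        (sub_one_sub_mlog_posSemidef (geom_spec (hA i) hXp).1)
      rw [Matrix.mul_sub, Matrix.mul_sub, Matrix.mul_one, Matrix.trace_sub,
        Matrix.trace_sub] at h0
      simp only [Complex.sub_re] at h0
      nlinarith [hw i]
    have hsum := Finset.sum_le_sum fun i (_ : i ∈ Finset.univ) => hterm i
    rw [Finset.sum_add_distrib, ← Finset.sum_mul, hw1, ← trace_mul_sum_smul_re, hlog] at hsum
    simpa using hsum
  have hup : 2 * ∑ i, w i * (X * geom (A i) X⁻¹).trace.re ≤ X.trace.re + Y.trace.re := by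
    have hXH := trace_mul_sum_smul_re w X fun i => geom (A i) Y⁻¹
    have hYH := trace_mul_sum_smul_re w Y fun i => geom (A i) Y⁻¹
    rw [hYeq, Matrix.mul_one] at hXH hYH
    rw [hXH, hYH, Finset.mul_sum, ← Finset.sum_add_distrib]
    refine Finset.sum_le_sum fun i _ => ?_
    obtain ⟨hG, hGX⟩ := geom_spec (hA i) hXp
    obtain ⟨hH, hHY⟩ := geom_spec (hA i) hY
    nlinarith [two_trace_le hXp hG hH (hGX.trans hHY.symm), hw i]
  have hcube : (X ^ 3).trace.re ≤ X.trace.re := by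
    -- `X - X³ = X (I - X) + X² (I - X)`
    have h1 := trace_mul_re_nonneg hXp.posSemidef hXle
    have h2 := trace_mul_re_nonneg (hXp.posSemidef.pow 2) hXle
    have hs : X - X ^ 3 = X * (1 - X) + X ^ 2 * (1 - X) := by noncomm_ring
    have h3 := congrArg (fun M => (Matrix.trace M).re) hs
    simp only [Matrix.trace_sub, Matrix.trace_add, Complex.sub_re, Complex.add_re] at h3
    linarith
  linarith
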